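/- (Per-step KV-reuse error bound, eq. (8) of the paper.) Let X ∈ ℝ^{B×d} have all rows x_i of ℓ² norm at most 1; let W_Q, W_K, W_V, W_O ∈ ℝ^{d×d}, W_U ∈ ℝ^{d×d_int}, W_D ∈ ℝ^{d_int×d}, E ∈ ℝ^{m×d}, and let σ : ℝ → ℝ be G_σ-Lipschitz, applied entrywise. Let K̂, V̂ ∈ ℝ^{B×d} be arbitrary (stale) key and value matrices whose value rows satisfy ‖(V̂)_j‖₂ ≤ ‖W_V‖₂ for all j. For each i set q_i = x_i W_Q, and define the full and reuse outputs o_i = softmax(q_i (X W_K)ᵀ / √d) (X W_V) W_O and ô_i = softmax(q_i K̂ᵀ / √d) V̂ W_O, with p_i = softmax(σ(o_i W_U) W_D Eᵀ) and p̂_i = softmax(σ(ô_i W_U) W_D Eᵀ). Then for every i, ‖p_i − p̂_i‖₁ ≤ ‖E‖_{2→∞} ‖W_D‖₂ G_σ ‖W_U‖₂ ‖W_O‖₂ ( ‖X W_V − V̂‖_F + (‖W_V‖₂ ‖W_Q‖₂ / √d) ‖X W_K − K̂‖_F ). -/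

import Mathlib

/-!
The output map is a chain of Lipschitz maps, and the bound is the product of the constants.

* `l1_softmax_sub_le`: softmax is 1-Lipschitz from `ℓ^∞` to `ℓ¹`. For a sign vector `s`, the
  derivative of `⟨s, softmax (z + t w)⟩` in `t` is the covariance of `s` and `w` under the softmax
  distribution, so it is at most `‖w‖_∞` in absolute value by Cauchy–Schwarz; the mean value
  inequality and the choice of `s` as the signs of the difference give the claim.
* `l2_vecMul_le_spec` and `abs_vecMul_transpose_le`: the suprema `spec` and `opNorm2inf` are
  finite and have the expected submultiplicativity.
* `l2_attention_sub_le`: the attention outputs differ by `a V - â V̂ = a (V - V̂) + (a - â) V̂`.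
  The first term is at most `‖V - V̂‖_F` because `‖a‖₂ ≤ 1`, and the second at most
  `‖a - â‖₁ max_j ‖V̂_j‖₂`, where `‖a - â‖₁` is controlled by the change of the logits.
-/

open scoped BigOperators
open Matrix

/-- Softmax of a vector. -/
noncomputable def softmax {n : ℕ} (z : Fin n → ℝ) : Fin n → ℝ :=
  fun j => Real.exp (z j) / ∑ k, Real.exp (z k)

/-- ℓ¹ norm. -/
noncomputable def l1 {n : ℕ} (v : Fin n → ℝ) : ℝ := ∑ j, |v j|

/-- ℓ² (Euclidean) norm. -/
noncomputable def l2 {n : ℕ} (v : Fin n → ℝ) : ℝ := Real.sqrt (∑ j, v j ^ 2)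

/-- ℓ^∞ norm. -/
noncomputable def linf {n : ℕ} (v : Fin n → ℝ) : ℝ := ⨆ j, |v j|

/-- Spectral norm (operator ℓ²→ℓ² norm) of a matrix acting on row vectors. -/
noncomputable def spec {m n : ℕ} (W : Matrix (Fin m) (Fin n) ℝ) : ℝ :=
  sSup {c | ∃ x : Fin m → ℝ, l2 x ≤ 1 ∧ c = l2 (x ᵥ* W)}

/-- Frobenius norm of a matrix. -/
noncomputable def frob {m n : ℕ} (W : Matrix (Fin m) (Fin n) ℝ) : ℝ :=
  Real.sqrt (∑ i, ∑ j, W i j ^ 2)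

/-- Operator norm of `h ↦ h Eᵀ` from ℓ² to ℓ¹. -/
noncomputable def opNorm21 {m d : ℕ} (E : Matrix (Fin m) (Fin d) ℝ) : ℝ :=
  sSup {c | ∃ h : Fin d → ℝ, l2 h ≤ 1 ∧ c = l1 (h ᵥ* Eᵀ)}

/-- Operator norm of `h ↦ h Eᵀ` from ℓ² to ℓ^∞. -/
noncomputable def opNorm2inf {m d : ℕ} (E : Matrix (Fin m) (Fin d) ℝ) : ℝ :=
  sSup {c | ∃ h : Fin d → ℝ, l2 h ≤ 1 ∧ c = linf (h ᵥ* Eᵀ)}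

/-- Condition number `κ(W) = σ_max(W)/σ_min(W)` of an invertible matrix,
expressed as `σ_max(W) · σ_max(W⁻¹)`. -/
noncomputable def condNum {d : ℕ} (W : Matrix (Fin d) (Fin d) ℝ) : ℝ := spec W * spec W⁻¹

/-- Output distribution of the attention block followed by the MLP and softmax
head, for a single query `q` against (possibly stale) keys `K` and values `V`. -/
noncomputable def reuseP {B d dint m : ℕ}
    (WO : Matrix (Fin d) (Fin d) ℝ)
    (WU : Matrix (Fin d) (Fin dint) ℝ) (WD : Matrix (Fin dint) (Fin d) ℝ)
    (E : Matrix (Fin m) (Fin d) ℝ) (σ : ℝ → ℝ)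
    (q : Fin d → ℝ) (K V : Matrix (Fin B) (Fin d) ℝ) : Fin m → ℝ :=
  let a : Fin B → ℝ := softmax (fun j => (q ᵥ* Kᵀ) j / Real.sqrt d)
  let o : Fin d → ℝ := (a ᵥ* V) ᵥ* WO
  let h : Fin d → ℝ := (fun k => σ ((o ᵥ* WU) k)) ᵥ* WD
  softmax (h ᵥ* Eᵀ)

/-! ### Euclidean and operator norms -/

lemma l2_nonneg {n : ℕ} (v : Fin n → ℝ) : 0 ≤ l2 v := Real.sqrt_nonneg _

lemma frob_nonneg {m n : ℕ} (W : Matrix (Fin m) (Fin n) ℝ) : 0 ≤ frob W := Real.sqrt_nonneg _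

lemma l2_eq_norm {n : ℕ} (v : Fin n → ℝ) : l2 v = ‖WithLp.toLp 2 v‖ := by
  simp [l2, EuclideanSpace.norm_eq]

lemma l2_add_le {n : ℕ} (v w : Fin n → ℝ) : l2 (v + w) ≤ l2 v + l2 w := by
  simp only [l2_eq_norm, WithLp.toLp_add]
  exact norm_add_le _ _

lemma l2_smul {n : ℕ} (c : ℝ) (v : Fin n → ℝ) : l2 (c • v) = |c| * l2 v := by
  simp only [l2_eq_norm, WithLp.toLp_smul, norm_smul, Real.norm_eq_abs]

lemma l2_eq_zero {n : ℕ} {v : Fin n → ℝ} (h : l2 v = 0) : v = 0 := by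
  rw [l2_eq_norm, norm_eq_zero] at h
  simpa using h

lemma abs_le_l2 {n : ℕ} (v : Fin n → ℝ) (j : Fin n) : |v j| ≤ l2 v := by
  refine Real.abs_le_sqrt ?_
  exact Finset.single_le_sum (f := fun j => v j ^ 2) (fun _ _ => sq_nonneg _) (Finset.mem_univ j)

lemma linf_le_l2 {n : ℕ} (v : Fin n → ℝ) : linf v ≤ l2 v :=
  Real.iSup_le (abs_le_l2 v) (l2_nonneg v)

lemma abs_le_linf {n : ℕ} (v : Fin n → ℝ) (j : Fin n) : |v j| ≤ linf v :=
  le_ciSup (f := fun j => |v j|) (Set.finite_range _).bddAbove j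

lemma l2_vecMul_le_frob {m n : ℕ} (x : Fin m → ℝ) (W : Matrix (Fin m) (Fin n) ℝ) :
    l2 (x ᵥ* W) ≤ l2 x * frob W := by
  unfold l2 frob
  rw [← Real.sqrt_mul (Finset.sum_nonneg fun _ _ => sq_nonneg _)]
  refine Real.sqrt_le_sqrt ?_
  rw [Finset.sum_comm (f := fun i j => W i j ^ 2), Finset.mul_sum]
  refine Finset.sum_le_sum fun j _ => ?_
  simpa [Matrix.vecMul, dotProduct] using
    Finset.sum_mul_sq_le_sq_mul_sq Finset.univ x (fun i => W i j)

/-- Both `spec` and `opNorm2inf` have the form of the supremum below, with `N` equal to `l2` and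
`linf`. The bound `N ≤ l2` makes the set bounded above, so the supremum is not a junk value. -/
lemma le_sSup_mul_l2 {m n : ℕ} (N : (Fin n → ℝ) → ℝ)
    (hsmul : ∀ (c : ℝ) v, 0 ≤ c → N (c • v) = c * N v) (hle : ∀ v, N v ≤ l2 v)
    (W : Matrix (Fin m) (Fin n) ℝ) (x : Fin m → ℝ) :
    N (x ᵥ* W) ≤ sSup {c | ∃ x : Fin m → ℝ, l2 x ≤ 1 ∧ c = N (x ᵥ* W)} * l2 x := by
  have hbdd : BddAbove {c | ∃ x : Fin m → ℝ, l2 x ≤ 1 ∧ c = N (x ᵥ* W)} := by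
    refine ⟨frob W, ?_⟩
    rintro _ ⟨y, hy, rfl⟩
    calc N (y ᵥ* W) ≤ l2 (y ᵥ* W) := hle _
      _ ≤ l2 y * frob W := l2_vecMul_le_frob y W
      _ ≤ 1 * frob W := by gcongr; exact frob_nonneg W
      _ = frob W := one_mul _
  rcases (l2_nonneg x).eq_or_lt with h0 | hpos
  · have hx := l2_eq_zero h0.symm
    have hN : N 0 = 0 := by simpa using hsmul 0 0 le_rfl
    rw [← h0, hx, Matrix.zero_vecMul, hN, mul_zero]
  · have hmem := le_csSup hbdd (a := (l2 x)⁻¹ * N (x ᵥ* W)) ⟨(l2 x)⁻¹ • x, by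
      rw [l2_smul, abs_of_pos (inv_pos.2 hpos), inv_mul_cancel₀ hpos.ne'], by
      rw [Matrix.smul_vecMul, hsmul _ _ (inv_pos.2 hpos).le]⟩
    rwa [inv_mul_le_iff₀ hpos, mul_comm] at hmem

lemma l2_vecMul_le_spec {m n : ℕ} (W : Matrix (Fin m) (Fin n) ℝ) (x : Fin m → ℝ) :
    l2 (x ᵥ* W) ≤ spec W * l2 x :=
  le_sSup_mul_l2 l2 (fun c v hc => by rw [l2_smul, abs_of_nonneg hc]) (fun _ => le_rfl) W x

lemma abs_vecMul_transpose_le {m d : ℕ} (E : Matrix (Fin m) (Fin d) ℝ) (h : Fin d → ℝ)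
    (j : Fin m) : |(h ᵥ* Eᵀ) j| ≤ opNorm2inf E * l2 h := by
  refine (abs_le_linf _ j).trans (le_sSup_mul_l2 linf (fun c v hc => ?_) linf_le_l2 Eᵀ h)
  simp only [linf, Pi.smul_apply, smul_eq_mul, abs_mul, abs_of_nonneg hc]
  exact (Real.mul_iSup_of_nonneg hc _).symm

lemma spec_nonneg {m n : ℕ} (W : Matrix (Fin m) (Fin n) ℝ) : 0 ≤ spec W := by
  refine Real.sSup_nonneg ?_
  rintro _ ⟨y, -, rfl⟩
  exact l2_nonneg _

lemma opNorm2inf_nonneg {m d : ℕ} (E : Matrix (Fin m) (Fin d) ℝ) : 0 ≤ opNorm2inf E := by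
  refine Real.sSup_nonneg ?_
  rintro _ ⟨y, -, rfl⟩
  exact Real.iSup_nonneg fun _ => abs_nonneg _

lemma l2_row_le_frob {m n : ℕ} (W : Matrix (Fin m) (Fin n) ℝ) (i : Fin m) :
    l2 (W i) ≤ frob W := by
  refine Real.sqrt_le_sqrt ?_
  exact Finset.single_le_sum (f := fun i => ∑ j, W i j ^ 2)
    (fun _ _ => Finset.sum_nonneg fun _ _ => sq_nonneg _) (Finset.mem_univ i)

lemma abs_dotProduct_le {n : ℕ} (v w : Fin n → ℝ) : |v ⬝ᵥ w| ≤ l2 v * l2 w := by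
  unfold l2
  rw [← Real.sqrt_mul (Finset.sum_nonneg fun _ _ => sq_nonneg _)]
  exact Real.abs_le_sqrt (Finset.sum_mul_sq_le_sq_mul_sq Finset.univ v w)

lemma l2_vecMul_le_l1 {m n : ℕ} (x : Fin m → ℝ) (W : Matrix (Fin m) (Fin n) ℝ) {c : ℝ}
    (hW : ∀ i, l2 (W i) ≤ c) : l2 (x ᵥ* W) ≤ l1 x * c := by
  have hx : x ᵥ* W = ∑ i, x i • W i := by
    ext j
    simp [Matrix.vecMul, dotProduct]
  have hsum : l2 (∑ i, x i • W i) ≤ ∑ i, l2 (x i • W i) := by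
    simp only [l2_eq_norm, WithLp.toLp_sum]
    exact norm_sum_le _ _
  rw [hx, l1, Finset.sum_mul]
  refine hsum.trans (Finset.sum_le_sum fun i _ => ?_)
  rw [l2_smul]
  exact mul_le_mul_of_nonneg_left (hW i) (abs_nonneg _)

lemma l2_map_sub_le {n : ℕ} {σ : ℝ → ℝ} {G : ℝ} (hG : 0 ≤ G)
    (hσ : ∀ a b : ℝ, |σ a - σ b| ≤ G * |a - b|) (u v : Fin n → ℝ) :
    l2 ((fun k => σ (u k)) - fun k => σ (v k)) ≤ G * l2 (u - v) := by
  rw [← abs_of_nonneg hG, ← l2_smul]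
  refine Real.sqrt_le_sqrt (Finset.sum_le_sum fun k _ => ?_)
  refine sq_le_sq.2 ?_
  simpa [abs_mul, abs_of_nonneg hG] using hσ (u k) (v k)

/-! ### Softmax -/

lemma softmax_nonneg {n : ℕ} (z : Fin n → ℝ) (j : Fin n) : 0 ≤ softmax z j :=
  div_nonneg (Real.exp_pos _).le (Finset.sum_nonneg fun _ _ => (Real.exp_pos _).le)

lemma sum_softmax_le_one {n : ℕ} (z : Fin n → ℝ) : ∑ j, softmax z j ≤ 1 := by
  simp only [softmax, ← Finset.sum_div]
  exact div_self_le_one _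

lemma l2_softmax_le_one {n : ℕ} (z : Fin n → ℝ) : l2 (softmax z) ≤ 1 := by
  rw [l2, Real.sqrt_le_one]
  refine (Finset.sum_le_sum fun j _ => ?_).trans (sum_softmax_le_one z)
  have hj : softmax z j ≤ 1 := (Finset.single_le_sum (fun i _ => softmax_nonneg z i)
    (Finset.mem_univ j)).trans (sum_softmax_le_one z)
  nlinarith [softmax_nonneg z j]

/-- The covariance bound `|Cov(s, w)| ≤ ‖w‖_∞` for a sign vector `s`, with respect to the
distribution proportional to the weights `e`, cleared of denominators. -/
lemma abs_covariance_le {n : ℕ} (e s w : Fin n → ℝ) {c : ℝ} (he : ∀ j, 0 ≤ e j)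
    (hs : ∀ j, s j ^ 2 = 1) (hw : ∀ j, |w j| ≤ c) (hc : 0 ≤ c) :
    |(∑ j, s j * (e j * w j)) * (∑ j, e j) - (∑ j, s j * e j) * ∑ j, e j * w j|
      ≤ c * (∑ j, e j) ^ 2 := by
  set D := ∑ j, e j with hD
  set N := ∑ j, s j * e j with hN
  have hD0 : 0 ≤ D := Finset.sum_nonneg fun j _ => he j
  have hrew : (∑ j, s j * (e j * w j)) * D - N * ∑ j, e j * w j
      = ∑ j, w j * (e j * (s j * D - N)) := by
    rw [Finset.sum_mul, Finset.mul_sum, ← Finset.sum_sub_distrib]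
    exact Finset.sum_congr rfl fun j _ => by ring
  have hvar : ∑ j, e j * (s j * D - N) ^ 2 = D * (D ^ 2 - N ^ 2) := by
    have h1 : ∀ j, e j * (s j * D - N) ^ 2
        = e j * (D ^ 2 + N ^ 2) - s j * e j * (2 * D * N) := fun j => by
      linear_combination e j * D ^ 2 * hs j
    simp only [h1, Finset.sum_sub_distrib, ← Finset.sum_mul, ← hD, ← hN]
    ring
  -- Cauchy–Schwarz with weights `e`: the mean absolute deviation is at most the deviation.
  have hdev : ∑ j, e j * |s j * D - N| ≤ D ^ 2 := by
    have hcs := Finset.sum_mul_sq_le_sq_mul_sq Finset.univ (fun j => √(e j))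
      (fun j => √(e j) * |s j * D - N|)
    simp only [← mul_assoc, Real.mul_self_sqrt (he _), mul_pow, Real.sq_sqrt (he _), sq_abs]
      at hcs
    rw [hvar, ← hD] at hcs
    refine abs_le_of_sq_le_sq' ?_ (sq_nonneg D) |>.2
    nlinarith [mul_nonneg (sq_nonneg D) (sq_nonneg N)]
  rw [hrew]
  calc |∑ j, w j * (e j * (s j * D - N))|
      ≤ ∑ j, |w j * (e j * (s j * D - N))| := Finset.abs_sum_le_sum_abs _ _
    _ ≤ ∑ j, c * (e j * |s j * D - N|) := Finset.sum_le_sum fun j _ => by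
        rw [abs_mul, abs_mul, abs_of_nonneg (he j)]
        exact mul_le_mul_of_nonneg_right (hw j) (mul_nonneg (he j) (abs_nonneg _))
    _ = c * ∑ j, e j * |s j * D - N| := (Finset.mul_sum _ _ _).symm
    _ ≤ c * D ^ 2 := mul_le_mul_of_nonneg_left hdev hc

/-- Softmax is 1-Lipschitz from `ℓ^∞` to `ℓ¹`. -/
lemma l1_softmax_sub_le {n : ℕ} (z z' : Fin n → ℝ) {c : ℝ} (hc : 0 ≤ c)
    (h : ∀ j, |z j - z' j| ≤ c) : l1 (softmax z - softmax z') ≤ c := by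
  rcases isEmpty_or_nonempty (Fin n) with hn | hn
  · simpa [l1] using hc
  set w : Fin n → ℝ := z - z' with hw
  set s : Fin n → ℝ := fun j => if 0 ≤ softmax z j - softmax z' j then 1 else -1 with hs
  have hs2 : ∀ j, s j ^ 2 = 1 := fun j => by
    simp only [hs]
    split_ifs <;> norm_num
  set e : ℝ → Fin n → ℝ := fun t j => Real.exp (z' j + t * w j) with he
  set D : ℝ → ℝ := fun t => ∑ j, e t j with hD
  set N : ℝ → ℝ := fun t => ∑ j, s j * e t j with hN
  have hDpos : ∀ t, 0 < D t := fun t =>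
    Finset.sum_pos (fun j _ => Real.exp_pos _) Finset.univ_nonempty
  have hed : ∀ t j, HasDerivAt (fun t => e t j) (e t j * w j) t := fun t j => by
    simpa using (((hasDerivAt_id t).mul_const (w j)).const_add (z' j)).exp
  have hDd : ∀ t, HasDerivAt D (∑ j, e t j * w j) t := fun t =>
    HasDerivAt.fun_sum fun j _ => hed t j
  have hNd : ∀ t, HasDerivAt N (∑ j, s j * (e t j * w j)) t := fun t =>
    HasDerivAt.fun_sum fun j _ => (hed t j).const_mul (s j)
  have hmv := norm_image_sub_le_of_norm_deriv_le_segment_01' (f := fun t => N t / D t) (C := c)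
    (fun t _ => ((hNd t).div (hDd t) (hDpos t).ne').hasDerivWithinAt) (fun t _ => by
      rw [Real.norm_eq_abs, abs_div, abs_of_pos (pow_pos (hDpos t) 2),
        div_le_iff₀ (pow_pos (hDpos t) 2)]
      exact abs_covariance_le (e t) s w (fun j => (Real.exp_pos _).le) hs2 h hc)
  have h1 : N 1 / D 1 = ∑ j, s j * softmax z j := by
    simp only [hN, hD, he, hw, softmax, Finset.sum_div, mul_div_assoc, one_mul, Pi.sub_apply,
      add_sub_cancel]
  have h0 : N 0 / D 0 = ∑ j, s j * softmax z' j := by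
    simp only [hN, hD, he, softmax, Finset.sum_div, mul_div_assoc, zero_mul, add_zero]
  have hl1 : l1 (softmax z - softmax z') = N 1 / D 1 - N 0 / D 0 := by
    rw [h1, h0, ← Finset.sum_sub_distrib, l1]
    refine Finset.sum_congr rfl fun j _ => ?_
    simp only [hs, Pi.sub_apply]
    split_ifs with hj
    · rw [abs_of_nonneg hj]; ring
    · rw [abs_of_neg (not_le.1 hj)]; ring
  rw [hl1]
  exact (le_abs_self _).trans hmv

/-! ### Attention and the output head -/

lemma l2_attention_sub_le {B d : ℕ} (q : Fin d → ℝ) (K V Kh Vh : Matrix (Fin B) (Fin d) ℝ)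
    {cq cv : ℝ} (hq : l2 q ≤ cq) (hcv : 0 ≤ cv) (hVh : ∀ j, l2 (Vh j) ≤ cv) :
    l2 (softmax (fun j => (q ᵥ* Kᵀ) j / √d) ᵥ* V - softmax (fun j => (q ᵥ* Khᵀ) j / √d) ᵥ* Vh)
      ≤ frob (V - Vh) + cv * cq / √d * frob (K - Kh) := by
  set a := softmax (fun j => (q ᵥ* Kᵀ) j / √d)
  set b := softmax (fun j => (q ᵥ* Khᵀ) j / √d)
  have hcq : 0 ≤ cq := (l2_nonneg q).trans hq
  have hsplit : a ᵥ* V - b ᵥ* Vh = a ᵥ* (V - Vh) + (a - b) ᵥ* Vh := by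
    rw [Matrix.vecMul_sub, Matrix.sub_vecMul]
    abel
  have hV : l2 (a ᵥ* (V - Vh)) ≤ frob (V - Vh) :=
    (l2_vecMul_le_frob _ _).trans
      (mul_le_of_le_one_left (frob_nonneg _) (l2_softmax_le_one _))
  have hab : l1 (a - b) ≤ cq * frob (K - Kh) / √d := by
    refine l1_softmax_sub_le _ _
      (div_nonneg (mul_nonneg hcq (frob_nonneg _)) (Real.sqrt_nonneg _)) fun j => ?_
    have hj : (q ᵥ* Kᵀ) j / √d - (q ᵥ* Khᵀ) j / √d = (q ⬝ᵥ (K - Kh) j) / √d := by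
      rw [← sub_div]
      congr 1
      exact (dotProduct_sub q (K j) (Kh j)).symm
    rw [hj, abs_div, abs_of_nonneg (Real.sqrt_nonneg _)]
    refine div_le_div_of_nonneg_right ?_ (Real.sqrt_nonneg _)
    exact (abs_dotProduct_le _ _).trans
      (mul_le_mul hq (l2_row_le_frob _ j) (l2_nonneg _) hcq)
  rw [hsplit]
  calc l2 (a ᵥ* (V - Vh) + (a - b) ᵥ* Vh)
      ≤ l2 (a ᵥ* (V - Vh)) + l2 ((a - b) ᵥ* Vh) := l2_add_le _ _
    _ ≤ frob (V - Vh) + cq * frob (K - Kh) / √d * cv :=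
        add_le_add hV ((l2_vecMul_le_l1 _ _ hVh).trans (mul_le_mul_of_nonneg_right hab hcv))
    _ = frob (V - Vh) + cv * cq / √d * frob (K - Kh) := by ring

/-- Lipschitz bound for the map from the attention average `u` to the output distribution. -/
lemma l1_head_sub_le {d dint m : ℕ} {G r : ℝ} (hG : 0 ≤ G)
    (WO : Matrix (Fin d) (Fin d) ℝ)
    (WU : Matrix (Fin d) (Fin dint) ℝ) (WD : Matrix (Fin dint) (Fin d) ℝ)
    (E : Matrix (Fin m) (Fin d) ℝ) {σ : ℝ → ℝ}
    (hσ : ∀ a b : ℝ, |σ a - σ b| ≤ G * |a - b|) (u v : Fin d → ℝ) (huv : l2 (u - v) ≤ r) :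
    l1 (softmax (((fun k => σ (((u ᵥ* WO) ᵥ* WU) k)) ᵥ* WD) ᵥ* Eᵀ)
      - softmax (((fun k => σ (((v ᵥ* WO) ᵥ* WU) k)) ᵥ* WD) ᵥ* Eᵀ))
      ≤ opNorm2inf E * spec WD * G * spec WU * spec WO * r := by
  have hr : 0 ≤ r := (l2_nonneg _).trans huv
  have hE := opNorm2inf_nonneg E
  have hD := spec_nonneg WD
  have hU := spec_nonneg WU
  have hO := spec_nonneg WO
  refine l1_softmax_sub_le _ _ (by positivity) fun j => ?_
  rw [← Pi.sub_apply, ← Matrix.sub_vecMul, ← Matrix.sub_vecMul]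
  have h1 : l2 ((u ᵥ* WO) ᵥ* WU - (v ᵥ* WO) ᵥ* WU) ≤ spec WU * (spec WO * r) := by
    rw [← Matrix.sub_vecMul, ← Matrix.sub_vecMul]
    refine (l2_vecMul_le_spec _ _).trans (mul_le_mul_of_nonneg_left ?_ hU)
    exact (l2_vecMul_le_spec _ _).trans (mul_le_mul_of_nonneg_left huv hO)
  have h2 := (l2_map_sub_le hG hσ ((u ᵥ* WO) ᵥ* WU) ((v ᵥ* WO) ᵥ* WU)).trans
    (mul_le_mul_of_nonneg_left h1 hG)
  have h3 := (l2_vecMul_le_spec WD _).trans (mul_le_mul_of_nonneg_left h2 hD)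
  refine ((abs_vecMul_transpose_le E _ j).trans (mul_le_mul_of_nonneg_left h3 hE)).trans_eq ?_
  ring

/-- per-step KV-reuse error bound (eq. (8) of the paper):
`‖p_i − p̂_i‖₁ ≤ ‖E‖_{2→∞}‖W_D‖₂ G_σ ‖W_U‖₂‖W_O‖₂
  (‖XW_V − V̂‖_F + (‖W_V‖₂‖W_Q‖₂/√d)‖XW_K − K̂‖_F)` for every `i`. -/
theorem kv_reuse_per_step_bound {B d dint m : ℕ} (Gσ : ℝ)
    (X : Matrix (Fin B) (Fin d) ℝ) (hX : ∀ i, l2 (X i) ≤ 1)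
    (WQ WK WV WO : Matrix (Fin d) (Fin d) ℝ)
    (WU : Matrix (Fin d) (Fin dint) ℝ) (WD : Matrix (Fin dint) (Fin d) ℝ)
    (E : Matrix (Fin m) (Fin d) ℝ) (σ : ℝ → ℝ)
    (hσ : ∀ a b : ℝ, |σ a - σ b| ≤ Gσ * |a - b|)
    (Kh Vh : Matrix (Fin B) (Fin d) ℝ)
    (hVh : ∀ j, l2 (Vh j) ≤ spec WV) :
    ∀ i, l1 (fun j =>
        reuseP WO WU WD E σ (X i ᵥ* WQ) (X * WK) (X * WV) j
      - reuseP WO WU WD E σ (X i ᵥ* WQ) Kh Vh j)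
    ≤ opNorm2inf E * spec WD * Gσ * spec WU * spec WO
        * (frob (X * WV - Vh)
           + (spec WV * spec WQ / Real.sqrt d) * frob (X * WK - Kh)) := by
  intro i
  -- The Lipschitz hypothesis at two distinct points forces a nonnegative constant.
  have hG : 0 ≤ Gσ := by simpa using (abs_nonneg _).trans (hσ 1 0)
  have hq : l2 (X i ᵥ* WQ) ≤ spec WQ :=
    (l2_vecMul_le_spec _ _).trans (mul_le_of_le_one_right (spec_nonneg _) (hX i))
  exact l1_head_sub_le hG WO WU WD E hσ _ _
    (l2_attention_sub_le (X i ᵥ* WQ) (X * WK) (X * WV) Kh Vh hq (spec_nonneg WV) hVh)
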